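/- Let R be a Noetherian ring and 𝔞 an ideal with dim R/𝔞 = 1. Let X• be a cochain complex of R-modules all of whose terms are 𝔞-weakly cofinite. Then every cohomology module H^i(X•) is 𝔞-weakly cofinite. -/

import Mathlib

open CategoryTheory

universe u

variable (R : Type u) [CommRing R]

/-- The `i`-th Ext module `Ext^i_R(N, M)` of `R`-modules. -/
noncomputable def extModule (i : ℕ) (N M : ModuleCat.{u} R) : ModuleCat.{u} R :=
  ((Ext R (ModuleCat.{u} R) i).obj (Opposite.op N)).obj M

/-- A module is weakly Laskerian if every quotient has finitely many associated primes. -/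
def IsWeaklyLaskerian (M : Type u) [AddCommGroup M] [Module R M] : Prop :=
  ∀ N : Submodule R M, (associatedPrimes R (M ⧸ N)).Finite

/-- `M` is `𝔞`-cofinite: `Supp M ⊆ V(𝔞)` and all `Ext^i_R(R/𝔞, M)` are finitely generated. -/
def IsCofinite (𝔞 : Ideal R) (M : ModuleCat.{u} R) : Prop :=
  Module.support R M ⊆ PrimeSpectrum.zeroLocus (𝔞 : Set R) ∧
    ∀ i : ℕ, Module.Finite R (extModule R i (ModuleCat.of R (R ⧸ 𝔞)) M)

/-- `M` is `𝔞`-weakly cofinite: `Supp M ⊆ V(𝔞)` and all `Ext^i_R(R/𝔞, M)` are weakly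
Laskerian. -/
def IsWeaklyCofinite (𝔞 : Ideal R) (M : ModuleCat.{u} R) : Prop :=
  Module.support R M ⊆ PrimeSpectrum.zeroLocus (𝔞 : Set R) ∧
    ∀ i : ℕ, IsWeaklyLaskerian R (extModule R i (ModuleCat.of R (R ⧸ 𝔞)) M)

/-- The Krull dimension of the support of a module. -/
noncomputable def suppDim (M : Type u) [AddCommGroup M] [Module R M] : WithBot ℕ∞ :=
  Order.krullDim (Module.support R M)

/-- The cohomological dimension `cd(𝔞, M) = sup {i | H^i_𝔞(M) ≠ 0}`, as an element of `ℕ∞`. -/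
noncomputable def cohomologicalDim (𝔞 : Ideal R) (M : ModuleCat.{u} R) : ℕ∞ :=
  ⨆ i ∈ {i : ℕ | Nontrivial ((localCohomology 𝔞 i).obj M)}, (i : ℕ∞)

/-- `p` is an attached prime of `M`: `p` is prime and is the annihilator of a quotient
of `M`. -/
def IsAttachedPrime (M : Type u) [AddCommGroup M] [Module R M] (p : Ideal R) : Prop :=
  p.IsPrime ∧ ∃ N : Submodule R M, p = Module.annihilator R (M ⧸ N)

/-!
Only `Ext^0` and `Ext^1` matter: if `Supp A ⊆ V(𝔞)` and `Ext^i(R/𝔞, A)` is weakly Laskerian for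
`i ≤ 1`, then `A` is weakly cofinite. The kernel of a map of weakly cofinite modules satisfies this
criterion, because the range, a submodule of a weakly cofinite module, has weakly Laskerian
`Hom(R/𝔞, -)`. Hence cycles, boundaries and homology are weakly cofinite.

For the criterion, let `p` be one of the finitely many minimal primes of `𝔞` with `V(p)` infinite.
A weakly Laskerian module killed by `p` has finite rank over `R/p`, as the direct sum of the `R/q`
for infinitely many `q ∈ V(p)` is not weakly Laskerian; so `A_p` is Artinian, and multiplication by
`x ∈ 𝔞` is surjective on `x^k A_p` for large `k`. Replacing `A` by `x^k A`, we may assume that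
`A/xA` vanishes at every such `p`, which makes its support finite and `A/xA` weakly Laskerian. The
kernel of `x` on `A` has a bigger annihilator and is weakly cofinite by Noetherian induction; since
`x` kills `Ext^i(R/𝔞, A)`, the kernel and the cokernel of `x` together control `A`.
-/

section ExtComparison

variable {R} {X Y : ModuleCat.{u} R} (P : ProjectiveResolution X)

open CochainComplex.HomComplex in
lemma extMk_zero_eq_zero_iff (f : P.complex.X 0 ⟶ Y) (hf : P.complex.d 1 0 ≫ f = 0) :
    P.extMk f 1 rfl hf = 0 ↔ f = 0 := by
  rw [← P.extEquivCohomologyClass.apply_eq_iff_eq,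
    ProjectiveResolution.extEquivCohomologyClass_extMk,
    ProjectiveResolution.extEquivCohomologyClass_zero, CohomologyClass.mk_eq_zero_iff,
    Cocycle.toSingleMk_mem_coboundaries_iff _ _ _ _ _ 1 (by simp)]
  constructor
  · rintro ⟨g, hg⟩
    have hP : Limits.IsZero (P.cochainComplex.X 1) := P.cochainComplex.isZero_of_isStrictlyLE 0 1
    rw [hP.eq_of_src g 0, Limits.comp_zero] at hg
    rw [← cancel_epi (P.cochainComplexXIso (-0) 0 rfl).hom, Limits.comp_zero]
    exact hg.symm
  · rintro rfl
    exact ⟨0, by simp⟩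

lemma extMk_smul (n : ℕ) (f : P.complex.X n ⟶ Y) (hf : P.complex.d (n + 1) n ≫ f = 0) (r : R) :
    P.extMk (r • f) (n + 1) rfl (by simp [hf]) = r • P.extMk f (n + 1) rfl hf := by
  rw [Abelian.Ext.smul_eq_comp_mk₀, P.extMk_comp_mk₀]
  simp

/-- The map sending a cocycle of `Hom(P, Y)`, for `P` a projective resolution of `X`, to its class
in `Ext^n(X, Y)`. It is used to compare the derived functor `Ext` with `Abelian.Ext`. -/
noncomputable def cocyclesToExt (Y : ModuleCat.{u} R) (n : ℕ) :
    LinearMap.ker ((P.complex.linearYonedaObj R Y).d n (n + 1)).hom →ₗ[R] Abelian.Ext X Y n where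
  toFun f := P.extMk f.1 (n + 1) rfl f.2
  map_add' _ _ := (P.add_extMk _ _ _ _ _ _).symm
  map_smul' r f := extMk_smul P n f.1 f.2 r

lemma cocyclesToExt_surjective (n : ℕ) : Function.Surjective (cocyclesToExt P Y n) := by
  intro a
  obtain ⟨f, hf, rfl⟩ := P.extMk_surjective a (n + 1) rfl
  exact ⟨⟨f, hf⟩, rfl⟩

lemma cocyclesToExt_eq_zero_iff (n : ℕ) (z) :
    cocyclesToExt P Y n z = 0 ↔
      ∃ w, ((P.complex.linearYonedaObj R Y).d ((ComplexShape.up ℕ).prev n) n).hom w = z.1 := by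
  obtain ⟨z, hz⟩ := z
  cases n with
  | zero =>
    have hd : (P.complex.linearYonedaObj R Y).d ((ComplexShape.up ℕ).prev 0) 0 = 0 :=
      HomologicalComplex.shape _ _ _ (by simp)
    rw [hd]
    refine (extMk_zero_eq_zero_iff P z hz).trans ?_
    exact ⟨fun h ↦ ⟨0, h.symm⟩, fun ⟨_, hw⟩ ↦ hw.symm⟩
  | succ n =>
    have hprev : (ComplexShape.up ℕ).prev (n + 1) = n := by simp
    rw [hprev]
    exact P.extMk_eq_zero_iff z _ rfl hz n rfl

/-- The comparison between the `Ext` modules defined by deriving `Hom` and those defined as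
morphisms in the derived category, for which Mathlib has the long exact sequences. -/
noncomputable def extModuleEquivExt (i : ℕ) (N M : ModuleCat.{u} R) :
    extModule R i N M ≃ₗ[R] Abelian.Ext N M i :=
  let P := ProjectiveResolution.of N
  let K := P.complex.linearYonedaObj R M
  let S := K.sc' ((ComplexShape.up ℕ).prev i) i (i + 1)
  let e : extModule R i N M ≅ S.moduleCatLeftHomologyData.H :=
    P.isoExt i M ≪≫ ShortComplex.homologyMapIso (K.isoSc' _ i (i + 1) rfl (by simp)) ≪≫
      S.moduleCatHomologyIso
  let π : LinearMap.ker S.g.hom →ₗ[R] Abelian.Ext N M i := cocyclesToExt P M i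
  have hπ : LinearMap.range S.moduleCatToCycles = LinearMap.ker π := by
    ext z
    refine Iff.trans ?_ (cocyclesToExt_eq_zero_iff P i z).symm
    exact exists_congr fun w ↦ Subtype.ext_iff
  e.toLinearEquiv ≪≫ₗ Submodule.quotEquivOfEq _ _ hπ ≪≫ₗ
    π.quotKerEquivOfSurjective (cocyclesToExt_surjective P i)

end ExtComparison

section AssociatedPrimes

variable {R} {M : Type*} [AddCommGroup M] [Module R M]

lemma mem_support_of_isAssociatedPrime {p : Ideal R} (hp : IsAssociatedPrime p M) :
    ⟨p, hp.isPrime⟩ ∈ Module.support R M := by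
  obtain ⟨-, m, hm⟩ := id hp
  refine Module.mem_support_iff_exists_annihilator.2 ⟨m, ?_⟩
  rw [← Submodule.bot_colon']
  exact Ideal.le_radical.trans hm.ge

end AssociatedPrimes

namespace IsWeaklyLaskerian

variable {R} {A B C : Type u} [AddCommGroup A] [Module R A] [AddCommGroup B] [Module R B]
  [AddCommGroup C] [Module R C]

lemma finite_associatedPrimes (h : IsWeaklyLaskerian R A) : (associatedPrimes R A).Finite := by
  rw [← LinearEquiv.AssociatedPrimes.eq (Submodule.quotEquivOfEqBot (⊥ : Submodule R A) rfl)]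
  exact h ⊥

lemma of_surjective (h : IsWeaklyLaskerian R A) (f : A →ₗ[R] B) (hf : Function.Surjective f) :
    IsWeaklyLaskerian R B := by
  intro N
  have hs : Function.Surjective (N.mkQ ∘ₗ f) := N.mkQ_surjective.comp hf
  rw [← LinearEquiv.AssociatedPrimes.eq (LinearMap.quotKerEquivOfSurjective _ hs)]
  exact h _

lemma of_injective (h : IsWeaklyLaskerian R B) (f : A →ₗ[R] B) (hf : Function.Injective f) :
    IsWeaklyLaskerian R A := by
  intro N
  refine (h (N.map f)).subset (associatedPrimes.subset_of_injective
    (f := N.mapQ (N.map f) f (Submodule.le_comap_map f N)) ?_)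
  rw [← LinearMap.ker_eq_bot, Submodule.ker_mapQ, Submodule.comap_map_eq_of_injective hf,
    Submodule.mkQ_map_self]

lemma of_linearEquiv (h : IsWeaklyLaskerian R A) (e : A ≃ₗ[R] B) : IsWeaklyLaskerian R B :=
  h.of_surjective e.toLinearMap e.surjective

lemma range (h : IsWeaklyLaskerian R A) (f : A →ₗ[R] B) : IsWeaklyLaskerian R f.range :=
  h.of_surjective f.rangeRestrict f.surjective_rangeRestrict

lemma mono {K L : Submodule R A} (h : IsWeaklyLaskerian R L) (hKL : K ≤ L) :
    IsWeaklyLaskerian R K :=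
  h.of_injective (Submodule.inclusion hKL) (Submodule.inclusion_injective hKL)

lemma of_submodule_of_quotient (K : Submodule R B) (h₁ : IsWeaklyLaskerian R K)
    (h₂ : IsWeaklyLaskerian R (B ⧸ K)) : IsWeaklyLaskerian R B := by
  intro N
  have hK : IsWeaklyLaskerian R (K.map N.mkQ) :=
    h₁.of_surjective (N.mkQ.submoduleMap K) (N.mkQ.submoduleMap_surjective K)
  have hQ : IsWeaklyLaskerian R ((B ⧸ N) ⧸ K.map N.mkQ) := by
    refine h₂.of_surjective (K.mapQ (K.map N.mkQ) N.mkQ (Submodule.le_comap_map _ _)) ?_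
    rw [← LinearMap.range_eq_top, Submodule.range_mapQ, Submodule.range_mkQ, Submodule.map_top,
      Submodule.range_mkQ]
  exact (hK.finite_associatedPrimes.union hQ.finite_associatedPrimes).subset
    (associatedPrimes.subset_union_of_exact (K.map N.mkQ).subtype_injective
      (LinearMap.exact_subtype_mkQ _))

lemma of_exact {f : A →ₗ[R] B} {g : B →ₗ[R] C} (hfg : ∀ b, g b = 0 → b ∈ f.range)
    (h₁ : IsWeaklyLaskerian R A) (h₃ : IsWeaklyLaskerian R C) : IsWeaklyLaskerian R B :=
  of_submodule_of_quotient g.ker ((h₁.range f).mono hfg)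
    ((h₃.of_injective _ g.range.subtype_injective).of_linearEquiv g.quotKerEquivRange.symm)

lemma of_subsingleton [Subsingleton A] : IsWeaklyLaskerian R A := fun N ↦ by
  rw [associatedPrimes.eq_empty_of_subsingleton]
  exact Set.finite_empty

lemma pi_fin (h : IsWeaklyLaskerian R A) (n : ℕ) : IsWeaklyLaskerian R (Fin n → A) := by
  induction n with
  | zero => exact of_subsingleton
  | succ n ih =>
    have hprod : IsWeaklyLaskerian R (A × (Fin n → A)) :=
      of_exact (f := LinearMap.inl R A _) (g := LinearMap.snd R A _)
        (fun b hb ↦ ⟨b.1, Prod.ext rfl hb.symm⟩) h ih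
    exact hprod.of_linearEquiv (Fin.consLinearEquiv R fun _ ↦ A)

lemma of_finite_support (h : (Module.support R A).Finite) : IsWeaklyLaskerian R A := fun N ↦
  (h.image PrimeSpectrum.asIdeal).subset fun p hp ↦
    ⟨⟨p, hp.isPrime⟩, Module.support_subset_of_surjective N.mkQ N.mkQ_surjective
      (mem_support_of_isAssociatedPrime hp), rfl⟩

end IsWeaklyLaskerian

section ExtSequences

variable {R}

lemma shortExact_shortComplexOfCompEqZero {A B C : Type u} [AddCommGroup A] [Module R A]
    [AddCommGroup B] [Module R B] [AddCommGroup C] [Module R C] {f : A →ₗ[R] B} {g : B →ₗ[R] C}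
    (hfg : Function.Exact f g) (hf : Function.Injective f) (hg : Function.Surjective g) :
    (ModuleCat.shortComplexOfCompEqZero f g hfg.linearMap_comp_eq_zero).ShortExact :=
  ModuleCat.shortComplex_shortExact _ hfg hf hg

variable {S : ShortComplex (ModuleCat.{u} R)} (X : ModuleCat.{u} R) {Y Z : ModuleCat.{u} R}

/-- The `R`-linear map `Ext^i(X, Y) → Ext^i(X, Z)` induced by a homomorphism `Y → Z`. -/
noncomputable abbrev extMapRight (f : Y ⟶ Z) (i : ℕ) :
    Abelian.Ext X Y i →ₗ[R] Abelian.Ext X Z i :=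
  (Abelian.Ext.mk₀ f).postcompOfLinear R X (add_zero i)

lemma ker_extMapRight_g_le (hS : S.ShortExact) (i : ℕ) :
    (extMapRight X S.g i).ker ≤ (extMapRight X S.f i).range :=
  fun y hy ↦ Abelian.Ext.covariant_sequence_exact₂ X hS y hy

lemma ker_extMapRight_f_le (hS : S.ShortExact) (i : ℕ) :
    (extMapRight X S.f (i + 1)).ker ≤ (hS.extClass.postcompOfLinear R X rfl).range :=
  fun y hy ↦ Abelian.Ext.covariant_sequence_exact₁ X hS y hy rfl

lemma ker_extClass_postcomp_le (hS : S.ShortExact) (i : ℕ) :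
    (hS.extClass.postcompOfLinear R X (rfl : i + 1 = i + 1)).ker ≤ (extMapRight X S.g i).range :=
  fun y hy ↦ Abelian.Ext.covariant_sequence_exact₃ X hS y rfl hy

lemma extMapRight_zero_injective (f : Y ⟶ Z) [Mono f] :
    Function.Injective (extMapRight X f 0) :=
  Abelian.Ext.postcomp_mk₀_injective_of_mono X f

lemma extMapRight_comp_eq_zero {x : R} (hx : x • 𝟙 X = 0) {f : Y ⟶ Z} {g : Z ⟶ Y}
    (hfg : f ≫ g = x • 𝟙 Y) (i : ℕ) (e : Abelian.Ext X Y i) :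
    extMapRight X g i (extMapRight X f i e) = 0 := by
  change (e.comp (Abelian.Ext.mk₀ f) (add_zero i)).comp (Abelian.Ext.mk₀ g) (add_zero i) = 0
  rw [Abelian.Ext.comp_assoc_of_second_deg_zero, Abelian.Ext.mk₀_comp_mk₀, hfg,
    ← Abelian.Ext.smul_eq_comp_mk₀]
  calc x • e = (Abelian.Ext.mk₀ (x • 𝟙 X)).comp e (zero_add i) := by
        rw [Abelian.Ext.mk₀_smul, Abelian.Ext.smul_comp, Abelian.Ext.mk₀_id_comp]
    _ = 0 := by rw [hx, Abelian.Ext.mk₀_zero, Abelian.Ext.zero_comp]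

lemma exact_subtype_ker_rangeRestrict {A B : Type*} [AddCommGroup A] [Module R A]
    [AddCommGroup B] [Module R B] (f : A →ₗ[R] B) :
    Function.Exact f.ker.subtype f.rangeRestrict := fun y ↦
  Subtype.ext_iff.trans (f.exact_subtype_ker_map y)

end ExtSequences

namespace IsWeaklyLaskerian

variable {R} {S : ShortComplex (ModuleCat.{u} R)} {X Y Z : ModuleCat.{u} R}

lemma ker_extMapRight_g (hS : S.ShortExact) {i : ℕ}
    (h₁ : IsWeaklyLaskerian R (Abelian.Ext X S.X₁ i)) :
    IsWeaklyLaskerian R (extMapRight X S.g i).ker :=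
  (h₁.range _).mono (ker_extMapRight_g_le X hS i)

lemma ker_extMapRight_f (hS : S.ShortExact) {i : ℕ}
    (h₃ : ∀ j < i, IsWeaklyLaskerian R (Abelian.Ext X S.X₃ j)) :
    IsWeaklyLaskerian R (extMapRight X S.f i).ker := by
  cases i with
  | zero =>
    have := hS.mono_f
    rw [LinearMap.ker_eq_bot.2 (extMapRight_zero_injective X S.f)]
    exact of_subsingleton
  | succ i => exact ((h₃ i i.lt_succ_self).range _).mono (ker_extMapRight_f_le X hS i)

lemma ext_X₁ (hS : S.ShortExact) {i : ℕ} (h₂ : IsWeaklyLaskerian R (Abelian.Ext X S.X₂ i))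
    (h₃ : ∀ j < i, IsWeaklyLaskerian R (Abelian.Ext X S.X₃ j)) :
    IsWeaklyLaskerian R (Abelian.Ext X S.X₁ i) :=
  of_exact (f := (extMapRight X S.f i).ker.subtype) (g := extMapRight X S.f i)
    (fun y hy ↦ ⟨⟨y, hy⟩, rfl⟩) (ker_extMapRight_f hS h₃) h₂

lemma ext_X₂ (hS : S.ShortExact) {i : ℕ} (h₁ : IsWeaklyLaskerian R (Abelian.Ext X S.X₁ i))
    (h₃ : IsWeaklyLaskerian R (Abelian.Ext X S.X₃ i)) :
    IsWeaklyLaskerian R (Abelian.Ext X S.X₂ i) :=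
  of_exact (ker_extMapRight_g_le X hS i) h₁ h₃

lemma ext_X₃ (hS : S.ShortExact) {i : ℕ} (h₁ : IsWeaklyLaskerian R (Abelian.Ext X S.X₁ (i + 1)))
    (h₂ : IsWeaklyLaskerian R (Abelian.Ext X S.X₂ i)) :
    IsWeaklyLaskerian R (Abelian.Ext X S.X₃ i) :=
  of_exact (ker_extClass_postcomp_le X hS i) h₂ h₁

lemma ext_of_smul_eq_comp {x : R} (hx : x • 𝟙 X = 0) {f : Y ⟶ Z} {g : Z ⟶ Y}
    (hfg : f ≫ g = x • 𝟙 Y) {i : ℕ} (hf : IsWeaklyLaskerian R (extMapRight X f i).ker)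
    (hg : IsWeaklyLaskerian R (extMapRight X g i).ker) :
    IsWeaklyLaskerian R (Abelian.Ext X Y i) :=
  of_exact (f := (extMapRight X f i).ker.subtype)
    (g := (extMapRight X f i).codRestrict _ (extMapRight_comp_eq_zero X hx hfg i))
    (fun y hy ↦ ⟨⟨y, congrArg Subtype.val hy⟩, rfl⟩) hf hg

lemma ext_of_iso (e : Y ≅ Z) {i : ℕ} (h : IsWeaklyLaskerian R (Abelian.Ext X Y i)) :
    IsWeaklyLaskerian R (Abelian.Ext X Z i) :=
  h.of_surjective (extMapRight X e.hom i) fun z ↦ ⟨extMapRight X e.inv i z, by simp⟩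

variable {A : Type u} [AddCommGroup A] [Module R A]

lemma linearMap {N : Type u} [AddCommGroup N] [Module R N] [Module.Finite R N]
    (h : IsWeaklyLaskerian R A) : IsWeaklyLaskerian R (N →ₗ[R] A) := by
  obtain ⟨n, p, hp⟩ := Module.Finite.exists_fin' R N
  have hfree : IsWeaklyLaskerian R ((Fin n → R) →ₗ[R] A) :=
    (h.pi_fin n).of_linearEquiv ((Pi.basisFun R (Fin n)).constr R)
  exact hfree.of_injective (LinearMap.lcomp R A p) fun _ _ hab ↦
    (LinearMap.cancel_right hp).1 hab

lemma ext [IsNoetherianRing R] (h : IsWeaklyLaskerian R A) (N : Type u) [AddCommGroup N]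
    [Module R N] [Module.Finite R N] (i : ℕ) :
    IsWeaklyLaskerian R (Abelian.Ext (ModuleCat.of R N) (ModuleCat.of R A) i) := by
  induction i generalizing N with
  | zero =>
    exact h.linearMap.of_linearEquiv
      (Abelian.Ext.linearEquiv₀ (R := R) |>.trans ModuleCat.homLinearEquiv).symm
  | succ n ih =>
    obtain ⟨F, _, _, _, _, f, hf⟩ := Module.exists_finite_presentation R N
    have hS := LinearMap.shortExact_shortComplexKer hf
    exact (ih f.ker).of_surjective
      (hS.extClass.precompOfLinear R (ModuleCat.of R A) (add_comm 1 n))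
      (precomp_extClass_surjective_of_projective_X₂ _ hS n)

end IsWeaklyLaskerian

/-- `M` is supported in `V(𝔞)` and `Ext^i(R/𝔞, M)` is weakly Laskerian for all `i ≤ n`. With
`n = ⊤` this is weak `𝔞`-cofiniteness; the finite values of `n` serve for dimension shifting. -/
structure IsWeaklyCofiniteUpTo {R : Type u} [CommRing R] (𝔞 : Ideal R) (n : ℕ∞) (M : Type u)
    [AddCommGroup M] [Module R M] : Prop where
  support_subset : Module.support R M ⊆ PrimeSpectrum.zeroLocus (𝔞 : Set R)
  ext : ∀ i : ℕ, i ≤ n →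
    IsWeaklyLaskerian R (Abelian.Ext (ModuleCat.of R (R ⧸ 𝔞)) (ModuleCat.of R M) i)

namespace IsWeaklyCofiniteUpTo

variable {R} {𝔞 : Ideal R} {n m : ℕ∞} {A B C : Type u} [AddCommGroup A] [Module R A]
  [AddCommGroup B] [Module R B] [AddCommGroup C] [Module R C]

lemma top_iff {M : ModuleCat.{u} R} :
    IsWeaklyCofiniteUpTo 𝔞 ⊤ M ↔ IsWeaklyCofinite R 𝔞 M := by
  refine ⟨fun h ↦ ⟨h.support_subset, fun i ↦ ?_⟩, fun h ↦ ⟨h.1, fun i _ ↦ ?_⟩⟩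
  · exact (h.ext i le_top).of_linearEquiv (extModuleEquivExt i _ M).symm
  · exact (h.2 i).of_linearEquiv (extModuleEquivExt i _ M)

lemma mono (h : IsWeaklyCofiniteUpTo 𝔞 n A) (hmn : m ≤ n) : IsWeaklyCofiniteUpTo 𝔞 m A :=
  ⟨h.support_subset, fun i hi ↦ h.ext i (hi.trans hmn)⟩

lemma of_isWeaklyLaskerian [IsNoetherianRing R]
    (hsupp : Module.support R A ⊆ PrimeSpectrum.zeroLocus (𝔞 : Set R))
    (h : IsWeaklyLaskerian R A) : IsWeaklyCofiniteUpTo 𝔞 n A :=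
  ⟨hsupp, fun i _ ↦ h.ext (R ⧸ 𝔞) i⟩

lemma of_linearEquiv (h : IsWeaklyCofiniteUpTo 𝔞 n A) (e : A ≃ₗ[R] B) :
    IsWeaklyCofiniteUpTo 𝔞 n B :=
  ⟨e.support_eq ▸ h.support_subset, fun i hi ↦ (h.ext i hi).ext_of_iso e.toModuleIso⟩

lemma left (hB : IsWeaklyCofiniteUpTo 𝔞 (n + 1) B) (hC : IsWeaklyCofiniteUpTo 𝔞 n C)
    {f : A →ₗ[R] B} {g : B →ₗ[R] C} (hf : Function.Injective f) (hg : Function.Surjective g)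
    (hfg : Function.Exact f g) : IsWeaklyCofiniteUpTo 𝔞 (n + 1) A where
  support_subset := (Module.support_subset_of_injective f hf).trans hB.support_subset
  ext i hi := .ext_X₁ (shortExact_shortComplexOfCompEqZero hfg hf hg) (hB.ext i hi)
    fun j hj ↦ hC.ext j <| (ENat.add_le_add_iff_right ENat.one_ne_top).1 <|
      (by exact_mod_cast hj : (j : ℕ∞) + 1 ≤ i).trans hi

lemma middle (hA : IsWeaklyCofiniteUpTo 𝔞 n A) (hC : IsWeaklyCofiniteUpTo 𝔞 n C)
    {f : A →ₗ[R] B} {g : B →ₗ[R] C} (hf : Function.Injective f) (hg : Function.Surjective g)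
    (hfg : Function.Exact f g) : IsWeaklyCofiniteUpTo 𝔞 n B where
  support_subset := by
    rw [Module.support_of_exact hfg hf hg]
    exact Set.union_subset hA.support_subset hC.support_subset
  ext i hi := .ext_X₂ (shortExact_shortComplexOfCompEqZero hfg hf hg) (hA.ext i hi) (hC.ext i hi)

lemma right (hA : IsWeaklyCofiniteUpTo 𝔞 (n + 1) A) (hB : IsWeaklyCofiniteUpTo 𝔞 n B)
    {f : A →ₗ[R] B} {g : B →ₗ[R] C} (hf : Function.Injective f) (hg : Function.Surjective g)
    (hfg : Function.Exact f g) : IsWeaklyCofiniteUpTo 𝔞 n C where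
  support_subset := (Module.support_subset_of_surjective g hg).trans hB.support_subset
  ext i hi := .ext_X₃ (shortExact_shortComplexOfCompEqZero hfg hf hg)
    (hA.ext (i + 1) (by exact_mod_cast add_le_add_left hi 1)) (hB.ext i hi)

lemma submodule_zero (h : IsWeaklyCofiniteUpTo 𝔞 0 A) (N : Submodule R A) :
    IsWeaklyCofiniteUpTo 𝔞 0 N where
  support_subset :=
    (Module.support_subset_of_injective N.subtype N.subtype_injective).trans h.support_subset
  ext i hi := by
    obtain rfl : i = 0 := by simpa using hi
    have : Mono (ModuleCat.ofHom N.subtype) :=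
      (ModuleCat.mono_iff_injective _).2 N.subtype_injective
    exact (h.ext 0 le_rfl).of_injective _
      (extMapRight_zero_injective _ (ModuleCat.ofHom N.subtype))

lemma isWeaklyLaskerian_torsionBySet (h : IsWeaklyCofiniteUpTo 𝔞 0 A) :
    IsWeaklyLaskerian R (Submodule.torsionBySet R A (𝔞 : Set R)) := by
  have hhom : IsWeaklyLaskerian R ((R ⧸ 𝔞) →ₗ[R] A) :=
    (h.ext 0 le_rfl).of_linearEquiv
      (Abelian.Ext.linearEquiv₀ (R := R) |>.trans ModuleCat.homLinearEquiv)
  refine (hhom.range (LinearMap.applyₗ (Ideal.Quotient.mk 𝔞 1))).mono fun m hm ↦ ?_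
  rw [Submodule.mem_torsionBySet_iff] at hm
  exact ⟨Submodule.liftQ 𝔞 (LinearMap.toSpanSingleton R A m) fun x hx ↦ hm ⟨x, hx⟩, one_smul R m⟩

lemma of_isTorsionBySet [IsNoetherianRing R] (h : IsWeaklyCofiniteUpTo 𝔞 0 A)
    (h𝔞 : Module.IsTorsionBySet R A (𝔞 : Set R)) : IsWeaklyCofiniteUpTo 𝔞 n A :=
  of_isWeaklyLaskerian h.support_subset
    (h.isWeaklyLaskerian_torsionBySet.of_linearEquiv
      (LinearEquiv.ofTop _ ((Module.isTorsionBySet_iff_torsionBySet_eq_top _).1 h𝔞)))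

lemma ker (hA : IsWeaklyCofiniteUpTo 𝔞 1 A) (hB : IsWeaklyCofiniteUpTo 𝔞 0 B) (f : A →ₗ[R] B) :
    IsWeaklyCofiniteUpTo 𝔞 1 f.ker :=
  left (n := 0) hA (hB.submodule_zero f.range) f.ker.subtype_injective f.surjective_rangeRestrict
    (exact_subtype_ker_rangeRestrict f)

lemma quotient {N : Submodule R A} (hN : IsWeaklyCofiniteUpTo 𝔞 (n + 1) N)
    (hA : IsWeaklyCofiniteUpTo 𝔞 n A) : IsWeaklyCofiniteUpTo 𝔞 n (A ⧸ N) :=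
  hN.right hA N.subtype_injective N.mkQ_surjective (LinearMap.exact_subtype_mkQ N)

lemma range {f : A →ₗ[R] B} (hA : IsWeaklyCofiniteUpTo 𝔞 n A)
    (hf : IsWeaklyCofiniteUpTo 𝔞 (n + 1) f.ker) : IsWeaklyCofiniteUpTo 𝔞 n f.range :=
  (hf.quotient hA).of_linearEquiv f.quotKerEquivRange

/-- `x ∈ 𝔞` kills `Ext^i(R/𝔞, A)`, so the map induced by `A → xA` takes values in the kernel of
the map induced by `xA → A`, which `Ext^{i-1}(R/𝔞, A/xA)` controls. -/
lemma of_ker_lsmul_of_quotient {x : R} (hx : x ∈ 𝔞)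
    (hsupp : Module.support R A ⊆ PrimeSpectrum.zeroLocus (𝔞 : Set R))
    (hker : IsWeaklyCofiniteUpTo 𝔞 n (LinearMap.lsmul R A x).ker)
    (hquot : IsWeaklyCofiniteUpTo 𝔞 n (A ⧸ (LinearMap.lsmul R A x).range)) :
    IsWeaklyCofiniteUpTo 𝔞 n A where
  support_subset := hsupp
  ext i hi := by
    set X := ModuleCat.of R (R ⧸ 𝔞)
    have hX : x • 𝟙 X = 0 := by
      ext
      exact Ideal.Quotient.eq_zero_iff_mem.2 (by simpa using hx)
    set f := LinearMap.lsmul R A x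
    refine .ext_of_smul_eq_comp hX (f := ModuleCat.ofHom f.rangeRestrict)
      (g := ModuleCat.ofHom f.range.subtype) rfl ?_ ?_
    · exact .ker_extMapRight_g (shortExact_shortComplexOfCompEqZero
        (exact_subtype_ker_rangeRestrict f) f.ker.subtype_injective f.surjective_rangeRestrict)
        (hker.ext i hi)
    · exact .ker_extMapRight_f (shortExact_shortComplexOfCompEqZero
        (LinearMap.exact_subtype_mkQ f.range) f.range.subtype_injective f.range.mkQ_surjective)
        fun j hj ↦ hquot.ext j (le_trans (by exact_mod_cast hj.le) hi)

end IsWeaklyCofiniteUpTo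

section Artinian

lemma wellFoundedGT_nat_orderHom {α : Type*} [PartialOrder α] [WellFoundedGT α] :
    WellFoundedGT (ℕ →o α) := by
  refine wellFoundedGT_iff_monotone_chain_condition.2 fun F ↦ ?_
  have stab (G : ℕ →o α) := wellFoundedGT_iff_monotone_chain_condition.1 ‹_› G
  choose c hc using fun n ↦ stab ⟨fun j ↦ F j n, fun _ _ h ↦ F.monotone h n⟩
  obtain ⟨k, hk⟩ := stab ⟨fun n ↦ F n n, fun i j h ↦ (F.monotone h i).trans ((F j).monotone h)⟩
  obtain ⟨J, hJ⟩ : ∃ J, ∀ n ≤ k, c n ≤ J := ⟨(Finset.range (k + 1)).sup c, fun n hn ↦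
    Finset.le_sup (Finset.mem_range.2 (Nat.lt_succ_of_le hn))⟩
  refine ⟨max J k, fun j hj ↦ le_antisymm (F.monotone hj) fun n ↦ ?_⟩
  rcases le_total n k with hn | hn
  · have hcn : c n ≤ max J k := (hJ n hn).trans (le_max_left _ _)
    exact ((hc n j (hcn.trans hj)).symm.trans (hc n _ hcn)).le
  · calc F j n ≤ F (max j n) (max j n) :=
          (F.monotone (le_max_left j n) n).trans ((F _).monotone (le_max_right _ _))
      _ = F k k := (hk _ (hn.trans (le_max_right _ _))).symm
      _ ≤ F (max J k) n := (F.monotone (le_max_right _ _) k).trans ((F _).monotone hn)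

variable {S : Type*} [CommRing S] {A : Type*} [AddCommGroup A] [Module S A]

/-- The submodules `(0 :_A x) ∩ x^n N` of `0 :_A x`, which decrease with `n`. When `x` acts locally
nilpotently they determine `N`, as the ideals of leading coefficients determine an ideal in the
proof of Hilbert's basis theorem. -/
def torsionByInfSMulPow (x : S) (N : Submodule S A) :
    ℕ →o (Submodule S (Submodule.torsionBy S A x))ᵒᵈ where
  toFun n := OrderDual.toDual
    ((N.map (LinearMap.lsmul S A (x ^ n))).comap (Submodule.torsionBy S A x).subtype)
  monotone' := monotone_nat_of_le_succ fun n ↦ Submodule.comap_mono <| by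
    rintro _ ⟨a, ha, rfl⟩
    exact ⟨x • a, N.smul_mem x ha, by simp [pow_succ, smul_smul, mul_comm]⟩

lemma le_of_torsionByInfSMulPow_le {x : S} (hx : ∀ a : A, ∃ n : ℕ, x ^ n • a = 0)
    {N L : Submodule S A} (hNL : N ≤ L) (h : torsionByInfSMulPow x N ≤ torsionByInfSMulPow x L) :
    L ≤ N := by
  suffices ∀ n : ℕ, ∀ a ∈ L, x ^ n • a = 0 → a ∈ N from
    fun a ha ↦ (hx a).elim fun n ↦ this n a ha
  intro n
  induction n with
  | zero =>
    intro a _ h0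
    rw [show a = 0 by simpa using h0]
    exact N.zero_mem
  | succ n ih =>
    intro a ha hn
    have htors : x ^ n • a ∈ Submodule.torsionBy S A x := by
      rwa [Submodule.mem_torsionBy_iff, smul_smul, ← pow_succ']
    obtain ⟨b, hb, hab⟩ : x ^ n • a ∈ N.map (LinearMap.lsmul S A (x ^ n)) :=
      h n (show ⟨_, htors⟩ ∈ (L.map (LinearMap.lsmul S A (x ^ n))).comap
        (Submodule.torsionBy S A x).subtype from ⟨a, ha, rfl⟩)
    have hab : x ^ n • b = x ^ n • a := hab
    have hsub : a - b ∈ N := ih _ (L.sub_mem ha (hNL hb)) (by rw [smul_sub, hab, sub_self])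
    exact (N.sub_mem_iff_left hb).1 hsub

lemma isArtinian_of_isArtinian_torsionBy {x : S} (hx : ∀ a : A, ∃ n : ℕ, x ^ n • a = 0)
    [IsArtinian S (Submodule.torsionBy S A x)] : IsArtinian S A := by
  have := wellFoundedGT_nat_orderHom (α := (Submodule S (Submodule.torsionBy S A x))ᵒᵈ)
  refine StrictAnti.wellFoundedLT (f := torsionByInfSMulPow x) fun N L hNL ↦ ?_
  exact ⟨fun n ↦ Submodule.comap_mono (Submodule.map_mono hNL.le),
    fun h ↦ hNL.not_ge (le_of_torsionByInfSMulPow_le hx hNL.le h)⟩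

lemma isArtinian_of_isArtinian_torsionBySet (s : Finset S)
    (hs : ∀ x ∈ s, ∀ a : A, ∃ n : ℕ, x ^ n • a = 0)
    [h : IsArtinian S (Submodule.torsionBySet S A (s : Set S))] : IsArtinian S A := by
  classical
  induction s using Finset.induction_on generalizing A with
  | empty =>
    have htop : Submodule.torsionBySet S A ((∅ : Finset S) : Set S) = ⊤ :=
      eq_top_iff.2 fun a _ ↦ by simp [Submodule.mem_torsionBySet_iff]
    exact isArtinian_of_linearEquiv (LinearEquiv.ofTop _ htop)
  | insert x s _ ih =>
    let K := Submodule.torsionBy S A x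
    let K' := Submodule.torsionBySet S K (s : Set S)
    have hK' (a : K') : (K.subtype ∘ₗ K'.subtype) a ∈
        Submodule.torsionBySet S A ((insert x s : Finset S) : Set S) := by
      refine (Submodule.mem_torsionBySet_iff _ _).2 fun ⟨y, hy⟩ ↦ ?_
      obtain rfl | hy := Finset.mem_insert.1 hy
      · exact a.1.2
      · exact congrArg Subtype.val ((Submodule.mem_torsionBySet_iff _ _).1 a.2 ⟨y, hy⟩)
    have : IsArtinian S K' := isArtinian_of_injective ((K.subtype ∘ₗ K'.subtype).codRestrict _ hK')
      ((LinearMap.injective_codRestrict_iff hK').2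
        (Subtype.val_injective.comp Subtype.val_injective))
    have : IsArtinian S K :=
      ih fun y hy a ↦ (hs y (Finset.mem_insert_of_mem hy) a).imp fun n hn ↦ Subtype.ext hn
    exact isArtinian_of_isArtinian_torsionBy (hs x (Finset.mem_insert_self x s))

lemma isArtinian_of_isTorsionBySet {m : Ideal S} [m.IsMaximal] [IsNoetherian S A]
    (h : Module.IsTorsionBySet S A (m : Set S)) : IsArtinian S A := by
  let := h.module
  let : Field (S ⧸ m) := Ideal.Quotient.field m
  have : IsSemisimpleModule S A := h.isSemisimpleModule_iff.1 inferInstance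
  exact ((IsSemisimpleModule.finite_tfae (R := S) (M := A)).out 1 2).1 ‹_›

end Artinian

section FiniteRank

variable {R} [IsNoetherianRing R] {M : Type u} [AddCommGroup M] [Module R M]

lemma IsWeaklyLaskerian.finite_zeroLocus_of_finsupp {p : Ideal R}
    (h : IsWeaklyLaskerian R (ℕ →₀ R ⧸ p)) : (PrimeSpectrum.zeroLocus (p : Set R)).Finite := by
  classical
  by_contra hinf
  let q : ℕ ↪ PrimeSpectrum.zeroLocus (p : Set R) := Set.Infinite.natEmbedding _ hinf
  let Q (n : ℕ) : Type u := R ⧸ (q n).1.asIdeal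
  let f : (ℕ →₀ R ⧸ p) →ₗ[R] Π₀ n, Q n :=
    DFinsupp.mapRange.linearMap (fun n ↦ Submodule.factor (q n).2) ∘ₗ
      (finsuppLequivDFinsupp R).toLinearMap
  have hf : Function.Surjective f :=
    ((DFinsupp.mapRange_surjective _ fun _ ↦ map_zero _).2
      fun n ↦ Submodule.factor_surjective (q n).2).comp (finsuppLequivDFinsupp R).surjective
  have hass (n : ℕ) : (q n).1.asIdeal ∈ associatedPrimes R (Π₀ n, Q n) :=
    (isAssociatedPrime_iff_exists_injective_linearMap _ _).2
      ⟨(q n).1.isPrime, DFinsupp.lsingle (M := Q) n, DFinsupp.single_injective (β := Q)⟩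
  refine Set.infinite_range_of_injective ?_
    ((h.of_surjective f hf).finite_associatedPrimes.subset (Set.range_subset_iff.2 hass))
  exact fun m n hmn ↦ q.injective (Subtype.ext (PrimeSpectrum.ext hmn))

lemma IsWeaklyLaskerian.exists_fg_forall_exists_smul_mem {p : Ideal R} [p.IsPrime]
    (hp : (PrimeSpectrum.zeroLocus (p : Set R)).Infinite)
    (h : IsWeaklyLaskerian R M) (hpM : Module.IsTorsionBySet R M (p : Set R)) :
    ∃ N : Submodule R M, N.FG ∧ ∀ m, ∃ t ∉ p, t • m ∈ N := by
  let _ := hpM.module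
  have : IsScalarTower R (R ⧸ p) M := hpM.isScalarTower
  obtain ⟨s, hs, hmax⟩ := exists_maximal_linearIndepOn (R ⧸ p) (id : M → M)
  have hfin : s.Finite := by
    by_contra hinf
    let e : ℕ ↪ s := Set.Infinite.natEmbedding s hinf
    have he : LinearIndependent (R ⧸ p) fun n ↦ (e n : M) := hs.comp e e.injective
    exact hp (h.of_injective
      ((Finsupp.linearCombination (R ⧸ p) fun n ↦ (e n : M)).restrictScalars R)
      he).finite_zeroLocus_of_finsupp
  refine ⟨Submodule.span R s, Submodule.fg_span hfin, fun m ↦ ?_⟩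
  by_cases hm : m ∈ s
  · exact ⟨1, (Ideal.ne_top_iff_one p).1 ‹p.IsPrime›.ne_top, by
      simpa using Submodule.subset_span hm⟩
  · obtain ⟨t, ht, hmem⟩ := hmax m hm
    obtain ⟨t, rfl⟩ := Ideal.Quotient.mk_surjective t
    rw [← Submodule.restrictScalars_span R (R ⧸ p) Ideal.Quotient.mk_surjective]
    exact ⟨t, mt Ideal.Quotient.eq_zero_iff_mem.2 ht, by simpa using hmem⟩

end FiniteRank

section LocalizedModule

open IsLocalRing

variable {R} {𝔞 p : Ideal R} {M : Type u} [AddCommGroup M] [Module R M]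

lemma exists_pow_smul_eq_zero (hM : Module.support R M ⊆ PrimeSpectrum.zeroLocus (𝔞 : Set R))
    {x : R} (hx : x ∈ 𝔞) (m : M) : ∃ n : ℕ, x ^ n • m = 0 := by
  have hsub : Subsingleton (LocalizedModule.Away x M) :=
    LocalizedModule.subsingleton_iff_support_subset.2
      (hM.trans (PrimeSpectrum.zeroLocus_anti_mono (Set.singleton_subset_iff.2 hx)))
  obtain ⟨_, ⟨n, rfl⟩, hn⟩ := LocalizedModule.subsingleton_iff.1 hsub m
  exact ⟨n, hn⟩

lemma exists_pow_smul_localizedModule_eq_zero [p.IsPrime] (hp : p ∈ 𝔞.minimalPrimes)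
    (hM : Module.support R M ⊆ PrimeSpectrum.zeroLocus (𝔞 : Set R)) {x : Localization.AtPrime p}
    (hx : x ∈ maximalIdeal (Localization.AtPrime p)) (c : LocalizedModule p.primeCompl M) :
    ∃ n : ℕ, x ^ n • c = 0 := by
  let I := Ideal.torsionOf (Localization.AtPrime p) _ c
  suffices x ∈ I.radical from this
  have h𝔞 : 𝔞.map (algebraMap R (Localization.AtPrime p)) ≤ I.radical := by
    refine Ideal.map_le_iff_le_comap.2 fun a ha ↦ ?_
    induction c using LocalizedModule.induction_on with
    | _ m t =>
      obtain ⟨n, hn⟩ := exists_pow_smul_eq_zero hM ha m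
      refine ⟨n, ?_⟩
      rw [Ideal.mem_torsionOf_iff, ← map_pow, algebraMap_smul, LocalizedModule.smul'_mk, hn,
        LocalizedModule.zero_mk]
  rw [← Localization.AtPrime.map_eq_maximalIdeal,
    ← IsLocalization.AtPrime.radical_map_of_mem_minimalPrimes _ p 𝔞 hp] at hx
  exact (Ideal.radical_le_radical_iff.2 h𝔞) hx

lemma localized_le_localized {S : Submonoid R} {K N : Submodule R M}
    (h : ∀ m ∈ K, ∃ t ∈ S, t • m ∈ N) : K.localized S ≤ N.localized S := by
  rintro _ ⟨m, hm, s, rfl⟩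
  obtain ⟨t, ht, htm⟩ := h m hm
  exact ⟨t • m, htm, ⟨t, ht⟩ * s, IsLocalizedModule.mk'_cancel_left _ m ⟨t, ht⟩ s⟩

lemma exists_smul_mem_torsionBySet {S : Submonoid R} {I : Ideal R} (hI : I.FG) {m : M}
    (hm : ∀ x ∈ I, x • LocalizedModule.mkLinearMap S M m = 0) :
    ∃ t ∈ S, t • m ∈ Submodule.torsionBySet R M (I : Set R) := by
  have := Module.Finite.iff_fg.2 hI
  obtain ⟨t, ht⟩ := Module.Finite.exists_smul_of_comp_eq_of_isLocalizedModule S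
    (LocalizedModule.mkLinearMap S M) (LinearMap.toSpanSingleton R M m ∘ₗ I.subtype) 0
    (LinearMap.ext fun x ↦ by simpa using hm x x.2)
  refine ⟨t, t.2, (Submodule.mem_torsionBySet_iff _ _).2 fun x ↦ ?_⟩
  simpa [smul_comm (x : R)] using! LinearMap.congr_fun ht x

lemma torsionBySet_map_le_localized (S : Submonoid R) {I : Ideal R} (hI : I.FG) :
    Submodule.torsionBySet (Localization S) (LocalizedModule S M)
      (I.map (algebraMap R (Localization S)) : Set (Localization S)) ≤
    (Submodule.torsionBySet R M (I : Set R)).localized S := by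
  intro c hc
  obtain ⟨⟨m, s⟩, rfl⟩ := IsLocalizedModule.mk'_surjective S (LocalizedModule.mkLinearMap S M) c
  have hI0 (x : R) (hx : x ∈ I) : x • LocalizedModule.mkLinearMap S M m = 0 := by
    have := (Submodule.mem_torsionBySet_iff _ _).1 hc
      ⟨algebraMap R (Localization S) x, Ideal.mem_map_of_mem _ hx⟩
    rw [← IsLocalizedModule.mk'_cancel' (LocalizedModule.mkLinearMap S M) m s, smul_comm,
      ← algebraMap_smul (Localization S) x]
    exact (congrArg (s • ·) this).trans (smul_zero s)
  obtain ⟨t, ht, htm⟩ := exists_smul_mem_torsionBySet hI hI0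
  exact ⟨t • m, htm, ⟨t, ht⟩ * s, IsLocalizedModule.mk'_cancel_left _ m ⟨t, ht⟩ s⟩

variable [IsNoetherianRing R]

lemma isArtinian_localizedModule [p.IsPrime] (hp : p ∈ 𝔞.minimalPrimes)
    (hinf : (PrimeSpectrum.zeroLocus (p : Set R)).Infinite)
    (hM : Module.support R M ⊆ PrimeSpectrum.zeroLocus (𝔞 : Set R))
    (hw : IsWeaklyLaskerian R (Submodule.torsionBySet R M (𝔞 : Set R))) :
    IsArtinian (Localization.AtPrime p) (LocalizedModule p.primeCompl M) := by
  let S := Localization.AtPrime p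
  let A := LocalizedModule p.primeCompl M
  let K := Submodule.torsionBySet R M (p : Set R)
  have hK : IsWeaklyLaskerian R K :=
    hw.mono (Submodule.torsionBySet_le_torsionBySet_of_subset hp.1.2)
  obtain ⟨N, hN, hKN⟩ := hK.exists_fg_forall_exists_smul_mem hinf
    (Submodule.torsionBySet_isTorsionBySet _)
  have hle : Submodule.torsionBySet S A (maximalIdeal S : Set S) ≤
      (N.map K.subtype).localized p.primeCompl := by
    rw [← Localization.AtPrime.map_eq_maximalIdeal]
    refine (torsionBySet_map_le_localized p.primeCompl (IsNoetherian.noetherian p)).trans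
      (localized_le_localized fun m hm ↦ ?_)
    obtain ⟨t, ht, htm⟩ := hKN ⟨m, hm⟩
    exact ⟨t, ht, _, htm, rfl⟩
  have := isNoetherian_of_fg_of_noetherian _
    (Submodule.localized_fg p.primeCompl (hN.map K.subtype))
  have := isNoetherian_of_le hle
  obtain ⟨s, hs⟩ := IsNoetherian.noetherian (maximalIdeal S)
  have : IsArtinian S (Submodule.torsionBySet S A (s : Set S)) := by
    rw [Submodule.torsionBySet_eq_torsionBySet_span, ← Ideal.submodule_span_eq, hs]
    exact isArtinian_of_isTorsionBySet (Submodule.torsionBySet_isTorsionBySet _)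
  exact isArtinian_of_isArtinian_torsionBySet s fun x hx ↦
    exists_pow_smul_localizedModule_eq_zero hp hM (hs ▸ Submodule.subset_span hx)

end LocalizedModule

section Support

variable {R} {M : Type u} [AddCommGroup M] [Module R M]

lemma eventually_forall_exists_smul_mem_range_pow_succ {S : Submonoid R}
    [IsArtinian (Localization S) (LocalizedModule S M)] (x : R) :
    ∀ᶠ n in Filter.atTop, ∀ m : M, ∃ t ∈ S,
      t • x ^ n • m ∈ (LinearMap.lsmul R M (x ^ (n + 1))).range := by
  filter_upwards [LinearMap.eventually_iInf_range_pow_eq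
    (algebraMap R (Module.End (Localization S) (LocalizedModule S M)) x)] with n hn m
  have hle := hn.symm.trans_le (iInf_le _ (n + 1))
  obtain ⟨c, hc⟩ := hle ⟨LocalizedModule.mk m 1, rfl⟩
  induction c using LocalizedModule.induction_on with
  | _ y s =>
    simp only [← map_pow, Module.algebraMap_end_apply, LocalizedModule.smul'_mk] at hc
    obtain ⟨u, hu⟩ := LocalizedModule.mk_eq.1 hc
    refine ⟨u * s, (u * s).2, u • y, ?_⟩
    rw [LinearMap.lsmul_apply, smul_comm, mul_smul]
    simpa only [one_smul, Submonoid.smul_def] using hu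

variable [IsNoetherianRing R] {𝔞 : Ideal R}

lemma exists_forall_exists_smul_mem_range_pow_succ
    (hM : Module.support R M ⊆ PrimeSpectrum.zeroLocus (𝔞 : Set R))
    (hw : IsWeaklyLaskerian R (Submodule.torsionBySet R M (𝔞 : Set R))) (x : R) :
    ∃ n : ℕ, ∀ p ∈ 𝔞.minimalPrimes, (PrimeSpectrum.zeroLocus (p : Set R)).Infinite →
      ∀ m : M, ∃ t ∉ p, t • x ^ n • m ∈ (LinearMap.lsmul R M (x ^ (n + 1))).range := by
  refine (((Ideal.finite_minimalPrimes_of_isNoetherianRing R 𝔞).eventually_all (l := .atTop)).2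
    fun p hp ↦ ?_).exists
  by_cases hinf : (PrimeSpectrum.zeroLocus (p : Set R)).Infinite
  · have := hp.1.1
    have := isArtinian_localizedModule hp hinf hM hw
    exact (eventually_forall_exists_smul_mem_range_pow_succ (S := p.primeCompl) x).mono
      fun n hn _ ↦ hn
  · simp [hinf]

lemma isAssociatedPrime_torsionBySet {q : Ideal R} (hq : IsAssociatedPrime q M) (h : 𝔞 ≤ q) :
    IsAssociatedPrime q (Submodule.torsionBySet R M (𝔞 : Set R)) := by
  obtain ⟨hqp, f, hf⟩ := (isAssociatedPrime_iff_exists_injective_linearMap _ _).1 hq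
  refine (isAssociatedPrime_iff_exists_injective_linearMap _ _).2
    ⟨hqp, f.codRestrict _ fun r ↦ (Submodule.mem_torsionBySet_iff _ _).2 fun x ↦ ?_,
      (LinearMap.injective_codRestrict_iff ..).2 hf⟩
  obtain ⟨r, rfl⟩ := Ideal.Quotient.mk_surjective r
  have hxr : (x : R) • Ideal.Quotient.mk q r = 0 :=
    Ideal.Quotient.eq_zero_iff_mem.2 (q.mul_mem_right r (h x.2))
  rw [← map_smul, hxr, map_zero]

lemma exists_isAssociatedPrime_le {p : PrimeSpectrum R} (hp : p ∈ Module.support R M) :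
    ∃ q, IsAssociatedPrime q M ∧ q ≤ p.asIdeal := by
  obtain ⟨m, hm⟩ := Module.mem_support_iff_exists_annihilator.1 hp
  obtain ⟨q, hq, hqp⟩ := Ideal.exists_minimalPrimes_le hm
  have hass : IsAssociatedPrime q (Submodule.span R {m}) :=
    Module.associatedPrimes.minimalPrimes_annihilator_subset_associatedPrimes R _ hq
  exact ⟨q, hass.map_of_injective (Submodule.span R {m}).subtype (Submodule.subtype_injective _),
    hqp⟩

lemma finite_support_of_isWeaklyLaskerian_torsionBySet
    (hM : Module.support R M ⊆ PrimeSpectrum.zeroLocus (𝔞 : Set R))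
    (hw : IsWeaklyLaskerian R (Submodule.torsionBySet R M (𝔞 : Set R)))
    (hfin : ∀ p ∈ Module.support R M, (PrimeSpectrum.zeroLocus (p.asIdeal : Set R)).Finite) :
    (Module.support R M).Finite := by
  have hass : (associatedPrimes R M).Finite := hw.finite_associatedPrimes.subset
    fun q hq ↦ isAssociatedPrime_torsionBySet hq (hM (mem_support_of_isAssociatedPrime hq))
  refine (hass.biUnion (t := fun q ↦ PrimeSpectrum.zeroLocus (q : Set R)) fun q hq ↦
    hfin _ (mem_support_of_isAssociatedPrime hq)).subset fun p hp ↦ ?_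
  obtain ⟨q, hq, hqp⟩ := exists_isAssociatedPrime_le hp
  exact Set.mem_biUnion hq hqp

end Support

/-- Every prime ideal containing `𝔞` that is contained in infinitely many primes is minimal over
`𝔞`. This is what the main result needs of `dim R/𝔞 ≤ 1`; it also holds, for instance, if `R` is
local and `dim R/𝔞 ≤ 2`. -/
def HasMinimalInfinitePrimes {R : Type u} [CommRing R] (𝔞 : Ideal R) : Prop :=
  ∀ p ∈ PrimeSpectrum.zeroLocus (𝔞 : Set R),
    (PrimeSpectrum.zeroLocus (p.asIdeal : Set R)).Infinite → p.asIdeal ∈ 𝔞.minimalPrimes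

lemma hasMinimalInfinitePrimes_of_ringKrullDim_quotient_le_one {R : Type u} [CommRing R]
    {𝔞 : Ideal R} (hdim : ringKrullDim (R ⧸ 𝔞) ≤ 1) : HasMinimalInfinitePrimes 𝔞 := by
  rw [ringKrullDim_quotient, Order.krullDim_le_one_iff] at hdim
  intro p hp hinf
  obtain ⟨r, hpr, hrp⟩ := (Set.Infinite.nontrivial hinf).exists_ne p
  rcases hdim ⟨p, hp⟩ with hmin | hmax
  · exact ⟨⟨p.isPrime, hp⟩, fun q hq hqp ↦ hmin (b := ⟨⟨q, hq.1⟩, hq.2⟩) hqp⟩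
  · have hrle : r ≤ p := hmax (b := ⟨r, Set.Subset.trans hp hpr⟩) hpr
    exact absurd (le_antisymm hrle hpr) hrp

namespace IsWeaklyCofiniteUpTo

variable {R} [IsNoetherianRing R] {𝔞 : Ideal R} {n : ℕ∞} {A B : Type u} [AddCommGroup A]
  [Module R A] [AddCommGroup B] [Module R B]

lemma of_forall_exists_smul_eq_zero (h : HasMinimalInfinitePrimes 𝔞)
    (hA : IsWeaklyCofiniteUpTo 𝔞 0 A)
    (hloc : ∀ p ∈ 𝔞.minimalPrimes, (PrimeSpectrum.zeroLocus (p : Set R)).Infinite →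
      ∀ m : A, ∃ t ∉ p, t • m = 0) : IsWeaklyCofiniteUpTo 𝔞 n A := by
  refine of_isWeaklyLaskerian hA.support_subset (.of_finite_support
    (finite_support_of_isWeaklyLaskerian_torsionBySet hA.support_subset
      hA.isWeaklyLaskerian_torsionBySet fun p hp ↦ ?_))
  by_contra hinf
  exact Module.notMem_support_iff'.2 (hloc _ (h p (hA.support_subset hp) hinf) hinf) hp

lemma top_of_forall_exists_smul_mem_range (h : HasMinimalInfinitePrimes 𝔞) {J : Ideal R} {x : R}
    (hx : x ∈ 𝔞)
    (hker : ∀ (B : Type u) [AddCommGroup B] [Module R B], J ≤ Module.annihilator R B →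
      IsWeaklyCofiniteUpTo 𝔞 1 B → IsWeaklyCofiniteUpTo 𝔞 ⊤ (LinearMap.lsmul R B x).ker)
    (hJ : J ≤ Module.annihilator R A) (hA : IsWeaklyCofiniteUpTo 𝔞 1 A) (k : ℕ)
    (hloc : ∀ p ∈ 𝔞.minimalPrimes, (PrimeSpectrum.zeroLocus (p : Set R)).Infinite →
      ∀ m : A, ∃ t ∉ p, t • x ^ k • m ∈ (LinearMap.lsmul R A (x ^ (k + 1))).range) :
    IsWeaklyCofiniteUpTo 𝔞 ⊤ A := by
  induction k generalizing A with
  | zero =>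
    let f := LinearMap.lsmul R A x
    have hrange : IsWeaklyCofiniteUpTo 𝔞 1 f.range := hA.range ((hker A hJ hA).mono le_top)
    refine of_ker_lsmul_of_quotient hx hA.support_subset (hker A hJ hA)
      (of_forall_exists_smul_eq_zero h
        (quotient (hrange.mono (by simp)) (hA.mono zero_le_one)) fun p hp hinf m ↦ ?_)
    obtain ⟨m, rfl⟩ := f.range.mkQ_surjective m
    obtain ⟨t, ht, htm⟩ := hloc p hp hinf m
    refine ⟨t, ht, (Submodule.Quotient.mk_eq_zero _).2 ?_⟩
    simpa using htm
  | succ k ih =>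
    let f := LinearMap.lsmul R A x
    have hrange : IsWeaklyCofiniteUpTo 𝔞 1 f.range := hA.range ((hker A hJ hA).mono le_top)
    refine (hker A hJ hA).middle (ih (hJ.trans ?_) hrange fun p hp hinf ↦ ?_)
      (Submodule.subtype_injective _) f.surjective_rangeRestrict
      (exact_subtype_ker_rangeRestrict f)
    · exact f.range.subtype.annihilator_le_of_injective f.range.subtype_injective
    · rintro ⟨_, m, rfl⟩
      obtain ⟨t, ht, a, ha⟩ := hloc p hp hinf m
      refine ⟨t, ht, ⟨x • a, a, rfl⟩, Subtype.ext ?_⟩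
      simpa [f, smul_smul, ← pow_succ] using ha

theorem top_of_one (h : HasMinimalInfinitePrimes 𝔞) (hA : IsWeaklyCofiniteUpTo 𝔞 1 A) :
    IsWeaklyCofiniteUpTo 𝔞 ⊤ A := by
  suffices ∀ (J : Ideal R) (B : Type u) [AddCommGroup B] [Module R B],
      J ≤ Module.annihilator R B → IsWeaklyCofiniteUpTo 𝔞 1 B → IsWeaklyCofiniteUpTo 𝔞 ⊤ B from
    this ⊥ A bot_le hA
  intro J
  induction J using WellFoundedGT.induction with
  | ind J ih =>
  intro B _ _ hJ hB
  have hB₀ : IsWeaklyCofiniteUpTo 𝔞 0 B := hB.mono zero_le_one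
  by_cases h𝔞 : 𝔞 ≤ J
  · exact hB₀.of_isTorsionBySet
      ((Module.isTorsionBySet_iff_subset_annihilator R B).2 (h𝔞.trans hJ))
  obtain ⟨x, hx, hxJ⟩ := SetLike.not_le_iff_exists.1 h𝔞
  obtain ⟨k, hk⟩ := exists_forall_exists_smul_mem_range_pow_succ hB.support_subset
    hB₀.isWeaklyLaskerian_torsionBySet x
  refine top_of_forall_exists_smul_mem_range h hx (fun C _ _ hJC hC ↦ ?_) hJ hB k hk
  let f := LinearMap.lsmul R C x
  refine ih (J ⊔ Ideal.span {x}) (by simpa using hxJ) f.ker (sup_le (hJC.trans ?_) ?_)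
    (hC.ker (hC.mono zero_le_one) f)
  · exact f.ker.subtype.annihilator_le_of_injective f.ker.subtype_injective
  · rw [Ideal.span_singleton_le_iff_mem, Module.mem_annihilator]
    exact fun m ↦ Subtype.ext m.2

lemma ker_top (h : HasMinimalInfinitePrimes 𝔞) (hA : IsWeaklyCofiniteUpTo 𝔞 ⊤ A)
    (hB : IsWeaklyCofiniteUpTo 𝔞 ⊤ B) (f : A →ₗ[R] B) : IsWeaklyCofiniteUpTo 𝔞 ⊤ f.ker :=
  top_of_one h ((hA.mono le_top).ker (hB.mono le_top) f)

lemma homology (h : HasMinimalInfinitePrimes 𝔞) (S : ShortComplex (ModuleCat.{u} R))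
    (h₁ : IsWeaklyCofiniteUpTo 𝔞 ⊤ S.X₁) (h₂ : IsWeaklyCofiniteUpTo 𝔞 ⊤ S.X₂)
    (h₃ : IsWeaklyCofiniteUpTo 𝔞 ⊤ S.X₃) :
    IsWeaklyCofiniteUpTo 𝔞 ⊤ S.homology := by
  have hcycles : IsWeaklyCofiniteUpTo 𝔞 ⊤ S.g.hom.ker := h₂.ker_top h h₃ S.g.hom
  have hboundaries : IsWeaklyCofiniteUpTo 𝔞 ⊤ S.moduleCatToCycles.range :=
    h₁.range (h₁.ker_top h hcycles S.moduleCatToCycles)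
  exact (hboundaries.quotient hcycles).of_linearEquiv S.moduleCatHomologyIso.symm.toLinearEquiv

end IsWeaklyCofiniteUpTo

theorem stmt17_general [IsNoetherianRing R] {𝔞 : Ideal R} (h𝔞 : HasMinimalInfinitePrimes 𝔞)
    {ι : Type*} {c : ComplexShape ι} (X : HomologicalComplex (ModuleCat.{u} R) c)
    (hX : ∀ i, IsWeaklyCofinite R 𝔞 (X.X i)) (i : ι) : IsWeaklyCofinite R 𝔞 (X.homology i) := by
  simp only [← IsWeaklyCofiniteUpTo.top_iff] at hX ⊢
  exact .homology h𝔞 (X.sc i) (hX _) (hX _) (hX _)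

theorem stmt17 [IsNoetherianRing R] (𝔞 : Ideal R) (hdim : ringKrullDim (R ⧸ 𝔞) = 1)
    (X : CochainComplex (ModuleCat.{u} R) ℤ)
    (hX : ∀ i : ℤ, IsWeaklyCofinite R 𝔞 (X.X i)) :
    ∀ i : ℤ, IsWeaklyCofinite R 𝔞 (X.homology i) :=
  stmt17_general R (hasMinimalInfinitePrimes_of_ringKrullDim_quotient_le_one hdim.le) X hX
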